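/- For every integer t ≥ 4, there exist polynomials α, β ∈ F_2[w_2,w_3,w_4] such that w_4^{2^{t-1}-2} = α·g_{2^t-2} + (g_{2^t-4})^2 + β·g_{2^t-5} + w_3^{2^{t-1}-1}·g_{2^{t-1}-5} holds in F_2[w_2,w_3,w_4]. -/

import Mathlib

open MvPolynomial

/-- The polynomials `g_r = g_r^{(4)}` in `F_2[w_2,w_3,w_4]` (variables `X 0 = w_2`,
`X 1 = w_3`, `X 2 = w_4`): `g_0 = 1`, `g_r = 0` for `r < 0`, and
`g_r = w_2·g_{r-2} + w_3·g_{r-3} + w_4·g_{r-4}` for `r ≥ 1`. -/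
noncomputable def g4 : ℤ → MvPolynomial (Fin 3) (ZMod 2)
  | r =>
    if r ≤ 0 then (if r = 0 then 1 else 0)
    else X 0 * g4 (r - 2) + X 1 * g4 (r - 3) + X 2 * g4 (r - 4)
  termination_by r => r.toNat
  decreasing_by all_goals omega

/-- The ideal `I_{n,4} = (g_{n-3}, g_{n-2}, g_{n-1}, g_n)` of `F_2[w_2,w_3,w_4]`. -/
noncomputable def I4 (n : ℤ) : Ideal (MvPolynomial (Fin 3) (ZMod 2)) :=
  Ideal.span {g4 (n - 3), g4 (n - 2), g4 (n - 1), g4 n}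


lemma g4_neg {r : ℤ} (h : r < 0) : g4 r = 0 := by
  rw [g4, if_pos h.le, if_neg h.ne]

lemma g4_zero : g4 0 = 1 := by
  rw [g4]; simp

lemma g4_rec {r : ℤ} (h : 0 < r) :
    g4 r = X 0 * g4 (r - 2) + X 1 * g4 (r - 3) + X 2 * g4 (r - 4) := by
  rw [g4, if_neg (by omega)]

lemma two_z : (2 : MvPolynomial (Fin 3) (ZMod 2)) = 0 := CharTwo.two_eq_zero

lemma g4_double (n : ℕ) : ∀ s : ℤ, s ≤ n →
    g4 (2 * s) = g4 s ^ 2 + X 0 * g4 (s - 1) ^ 2 + X 2 * g4 (s - 2) ^ 2 ∧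
    g4 (2 * s + 1) = X 1 * g4 (s - 1) ^ 2 := by
  have two := two_z
  induction n with
  | zero =>
    intro s hs
    rcases lt_or_eq_of_le hs with h | h
    · simp at h
      rw [g4_neg (r := 2 * s) (by omega), g4_neg (r := s) (by omega),
        g4_neg (r := s - 1) (by omega), g4_neg (r := s - 2) (by omega),
        g4_neg (r := 2 * s + 1) (by omega)]
      simp
    · simp at h
      subst h
      constructor
      · simp [g4_zero, g4_neg]
      · rw [g4_rec (by norm_num)]
        simp [g4_neg]
  | succ n ih =>
    intro s hs
    rcases lt_or_eq_of_le hs with h | h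
    · exact ih s (by push_cast at h; omega)
    · have h1 := ih (s - 1) (by push_cast at h; omega)
      have h2 := ih (s - 2) (by push_cast at h; omega)
      have hp : 0 < s := by push_cast at h; omega
      have e : g4 (2 * s) = g4 s ^ 2 + X 0 * g4 (s - 1) ^ 2 + X 2 * g4 (s - 2) ^ 2 := by
        rw [g4_rec (r := 2 * s) (by omega), g4_rec hp,
          show 2 * s - 2 = 2 * (s - 1) by ring, show 2 * s - 3 = 2 * (s - 2) + 1 by ring,
          show 2 * s - 4 = 2 * (s - 2) by ring, h1.1, h2.1, h2.2,
          show s - 1 - 1 = s - 2 by ring, show s - 1 - 2 = s - 3 by ring,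
          show s - 2 - 1 = s - 3 by ring, show s - 2 - 2 = s - 4 by ring]
        linear_combination (X 0 * X 2 * g4 (s - 3) ^ 2
          - X 0 * X 1 * g4 (s - 2) * g4 (s - 3)
          - X 0 * X 2 * g4 (s - 2) * g4 (s - 4)
          - X 1 * X 2 * g4 (s - 3) * g4 (s - 4)) * two
      refine ⟨e, ?_⟩
      rw [g4_rec (r := 2 * s + 1) (by omega),
          show 2 * s + 1 - 2 = 2 * (s - 1) + 1 by ring, show 2 * s + 1 - 3 = 2 * (s - 1) by ring,
          show 2 * s + 1 - 4 = 2 * (s - 2) + 1 by ring, h1.1, h2.2, h1.2,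
          show s - 1 - 1 = s - 2 by ring, show s - 1 - 2 = s - 3 by ring,
          show s - 2 - 1 = s - 3 by ring]
      linear_combination (X 1 * X 0 * g4 (s - 2) ^ 2 + X 1 * X 2 * g4 (s - 3) ^ 2) * two

lemma g4_even (s : ℤ) :
    g4 (2 * s) = g4 s ^ 2 + X 0 * g4 (s - 1) ^ 2 + X 2 * g4 (s - 2) ^ 2 :=
  (g4_double s.toNat s (Int.self_le_toNat s)).1

lemma g4_odd (s : ℤ) : g4 (2 * s + 1) = X 1 * g4 (s - 1) ^ 2 :=
  (g4_double s.toNat s (Int.self_le_toNat s)).2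

noncomputable def gA (k : ℕ) : MvPolynomial (Fin 3) (ZMod 2) := g4 (2 ^ k - 2)
noncomputable def gB (k : ℕ) : MvPolynomial (Fin 3) (ZMod 2) := g4 (2 ^ k - 4)

lemma gZ (k : ℕ) : g4 (2 ^ k - 3) = 0 := by
  induction k with
  | zero => exact g4_neg (by norm_num)
  | succ k ih =>
    rw [show (2 : ℤ) ^ (k + 1) - 3 = 2 * (2 ^ k - 2) + 1 by ring, g4_odd,
      show (2 : ℤ) ^ k - 2 - 1 = 2 ^ k - 3 by ring, ih]
    simp

lemma gB_succ (k : ℕ) : gB (k + 1) = gA k ^ 2 + X 2 * gB k ^ 2 := by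
  unfold gA gB
  rw [show (2 : ℤ) ^ (k + 1) - 4 = 2 * (2 ^ k - 2) by ring, g4_even,
      show (2 : ℤ) ^ k - 2 - 1 = 2 ^ k - 3 by ring, gZ,
      show (2 : ℤ) ^ k - 2 - 2 = 2 ^ k - 4 by ring]
  ring

lemma gA_succ (k : ℕ) : gA (k + 2) = X 1 ^ 2 * gA k ^ 4 + X 0 * gA (k + 1) ^ 2 := by
  unfold gA
  rw [show (2 : ℤ) ^ (k + 2) - 2 = 2 * (2 ^ (k + 1) - 1) by ring, g4_even,
      show (2 : ℤ) ^ (k + 1) - 1 - 2 = 2 ^ (k + 1) - 3 by ring, gZ,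
      show (2 : ℤ) ^ (k + 1) - 1 - 1 = 2 ^ (k + 1) - 2 by ring,
      show (2 : ℤ) ^ (k + 1) - 1 = 2 * (2 ^ k - 1) + 1 by ring, g4_odd,
      show (2 : ℤ) ^ k - 1 - 1 = 2 ^ k - 2 by ring]
  ring

lemma gC (k : ℕ) : g4 (2 ^ (k + 1) - 5) = X 1 * gB k ^ 2 := by
  unfold gB
  rw [show (2 : ℤ) ^ (k + 1) - 5 = 2 * (2 ^ k - 3) + 1 by ring, g4_odd,
      show (2 : ℤ) ^ k - 3 - 1 = 2 ^ k - 4 by ring]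

lemma gA_zero : gA 0 = 0 := g4_neg (by norm_num)
lemma gA_one : gA 1 = 1 := by unfold gA; norm_num [g4_zero]
lemma gB_zero : gB 0 = 0 := g4_neg (by norm_num)
lemma gB_one : gB 1 = 0 := g4_neg (by norm_num)

lemma sq3 (a b : MvPolynomial (Fin 3) (ZMod 2)) : (a + b) ^ 2 = a ^ 2 + b ^ 2 :=
  CharTwo.add_sq a b

lemma gA_rec (k : ℕ) : gA (k + 2) = X 0 ^ 2 ^ k * gA (k + 1) + X 1 ^ 2 ^ k * gA k := by
  induction k using Nat.twoStepInduction with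
  | zero => rw [gA_succ]; simp [gA_zero, gA_one]
  | one =>
    rw [gA_succ, gA_succ 0]; simp [gA_zero, gA_one]; ring
  | more k h1 h2 =>
    have q : gA (k + 2 + 2) = X 1 ^ 2 * (X 0 ^ 2 ^ k * gA (k + 1) + X 1 ^ 2 ^ k * gA k) ^ (2 * 2)
        + X 0 * (X 0 ^ 2 ^ (k + 1) * gA (k + 2) + X 1 ^ 2 ^ (k + 1) * gA (k + 1)) ^ 2 := by
      rw [gA_succ (k + 2), ← h1]
      congr 3
    have q1 : gA (k + 2 + 1) = _ := gA_succ (k + 1)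
    have q2 := gA_succ k
    rw [pow_mul, sq3, sq3, sq3] at q
    rw [q, q1]
    rw [show k + 1 + 1 = k + 2 by rfl]
    linear_combination (- X 1 ^ 2 ^ (k + 2)) * q2

lemma gB_rec (k : ℕ) :
    gB (k + 2) = X 0 ^ 2 ^ k * gB (k + 1) + X 1 ^ 2 ^ k * gB k + X 2 ^ (2 ^ k - 1) := by
  induction k with
  | zero => rw [gB_succ]; simp [gA_one, gB_zero, gB_one]
  | succ k ih =>
    have q : gB (k + 1 + 2) = _ := gB_succ (k + 2)
    have q1 : gB (k + 1 + 1) = _ := gB_succ (k + 1)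
    rw [ih, gA_rec, sq3, sq3, sq3] at q
    rw [q, q1, gB_succ k]
    have h : 2 ^ (k + 1) - 1 = (2 ^ k - 1) * 2 + 1 := by
      have := Nat.one_le_two_pow (n := k)
      rw [pow_succ]; omega
    rw [h]
    ring

lemma gA_mod (k : ℕ) : ∃ h, gA (k + 1) = X 0 ^ (2 ^ k - 1) + X 1 * h := by
  induction k with
  | zero => exact ⟨0, by simp [gA_one]⟩
  | succ k ih =>
    obtain ⟨h, hh⟩ := ih
    refine ⟨X 1 * gA k ^ 4 + X 0 * X 1 * h ^ 2, ?_⟩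
    rw [gA_succ, hh, sq3]
    have h : 2 ^ (k + 1) - 1 = (2 ^ k - 1) * 2 + 1 := by
      have := Nat.one_le_two_pow (n := k)
      rw [pow_succ]; omega
    rw [h]
    ring

/-- Lemma 3.7: for every `t ≥ 4` there are `α, β ∈ F_2[w_2,w_3,w_4]` with
`w_4^{2^{t-1}-2} = α g_{2^t-2} + (g_{2^t-4})^2 + β g_{2^t-5} + w_3^{2^{t-1}-1} g_{2^{t-1}-5}`. -/
theorem stmt11 (t : ℕ) (ht : 4 ≤ t) :
    ∃ α β : MvPolynomial (Fin 3) (ZMod 2),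
      (X 2 : MvPolynomial (Fin 3) (ZMod 2)) ^ (2 ^ (t - 1) - 2) =
        α * g4 (2 ^ t - 2) + g4 (2 ^ t - 4) ^ 2 + β * g4 (2 ^ t - 5)
          + X 1 ^ (2 ^ (t - 1) - 1) * g4 (2 ^ (t - 1) - 5) := by
  obtain ⟨k, rfl⟩ : ∃ k, t = k + 2 := ⟨t - 2, by omega⟩
  obtain ⟨h, hh⟩ := gA_mod (k + 1)
  refine ⟨X 0 * gB (k + 1) ^ 2, X 0 * h, ?_⟩
  have e1 : k + 2 - 1 = k + 1 := by omega
  rw [e1, gC (k + 1), gC k]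
  change _ = _ * gA (k + 2) + gB (k + 2) ^ 2 + _ + _
  rw [hh, gB_rec]
  simp only [sq3]
  have hp := Nat.one_le_two_pow (n := k)
  obtain ⟨m, hm⟩ : ∃ m, 2 ^ k = m + 1 := ⟨2 ^ k - 1, by omega⟩
  have e2 : 2 ^ (k + 1) - 1 = 2 * m + 1 := by rw [pow_succ]; omega
  have e3 : 2 ^ (k + 1) - 2 = 2 * m := by rw [pow_succ]; omega
  rw [e2, e3, hm, Nat.add_sub_cancel]
  have two := two_z
  linear_combination (-(X 0 ^ (2 * m + 2) * gB (k + 1) ^ 2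
    + X 0 * X 1 * h * gB (k + 1) ^ 2 + X 1 ^ (2 * m + 2) * gB k ^ 2)) * two
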